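/- Let Γ be a valued structure with a finite domain. Then there exists a valued structure Δ with a finite domain and the same signature as Γ such that Δ is a core and Δ is fractionally homomorphically equivalent to Γ. -/

import Mathlib

open scoped ENNReal NNReal

/-- The value space `ℚ ∪ {∞}`. -/
abbrev QInf : Type := WithTop ℚ

/-- The embedding of `ℚ ∪ {∞}` into the extended reals. -/
noncomputable def QInf.toE (x : QInf) : EReal :=
  WithTop.recTopCoe ⊤ (fun q : ℚ => ((q : ℝ) : EReal)) x

/-- A relational signature: a collection of relation symbols with arities. -/
structure Signature where
  symbols : Type
  arity : symbols → ℕ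

/-- A valued `τ`-structure with domain `C`. -/
def VStruct (τ : Signature) (C : Type) : Type :=
  ∀ s : τ.symbols, (Fin (τ.arity s) → C) → QInf

/-- A probability distribution on a finite type, given by its weight function. -/
def FinDist {β : Type} [Fintype β] (w : β → ℝ≥0) : Prop :=
  ∑ f : β, w f = 1

/-- Over a finite domain, a fractional operation (given by its weight function `w`)
improves a `k`-ary valued relation `R`:
`Σ_f w(f)·R(f(a^1,…,a^ℓ)) ≤ (1/ℓ)·Σ_j R(a^j)` for all `a^1,…,a^ℓ ∈ C^k`
(where `0·∞ = 0`, computed in the extended reals). -/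
def FinImproves {C : Type} [Fintype C] [DecidableEq C] {ℓ k : ℕ}
    (w : ((Fin ℓ → C) → C) → ℝ≥0) (R : (Fin k → C) → QInf) : Prop :=
  ∀ a : Fin ℓ → Fin k → C,
    (∑ f : (Fin ℓ → C) → C,
        (((w f : ℝ)) : EReal) * QInf.toE (R fun i => f fun j => a j i)) ≤
      (((ℓ : ℝ)⁻¹ : ℝ) : EReal) * ∑ j : Fin ℓ, QInf.toE (R (a j))

/-- A fractional polymorphism of a valued structure over a finite domain: a probability
distribution on the `ℓ`-ary operations improving every valued relation of `Γ`. -/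
def FinFracPol {τ : Signature} {C : Type} [Fintype C] [DecidableEq C]
    (Γ : VStruct τ C) {ℓ : ℕ} (w : ((Fin ℓ → C) → C) → ℝ≥0) : Prop :=
  FinDist w ∧ ∀ s : τ.symbols, FinImproves w (Γ s)

/-- A fractional homomorphism from `Δ` (domain `D`) to `Γ` (domain `C`) over finite
domains: a probability distribution `ν` on the maps `D → C` with
`Σ_g ν(g)·R^Γ(g(a)) ≤ R^Δ(a)` for every symbol and tuple. -/
def FinFracHom {τ : Signature} {D C : Type} [Fintype D] [DecidableEq D] [Fintype C]
    (Δ : VStruct τ D) (Γ : VStruct τ C) (ν : (D → C) → ℝ≥0) : Prop :=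
  FinDist ν ∧
    ∀ (s : τ.symbols) (a : Fin (τ.arity s) → D),
      (∑ g : D → C, (((ν g : ℝ)) : EReal) * QInf.toE (Γ s (g ∘ a))) ≤
        QInf.toE (Δ s a)

/-- A cyclic operation: `f(x_1,…,x_ℓ) = f(x_2,…,x_ℓ,x_1)`. -/
def IsCyclicOp {C : Type} {ℓ : ℕ} (f : (Fin ℓ → C) → C) : Prop :=
  ∀ x : Fin ℓ → C, f x = f (x ∘ finRotate ℓ)

/-- A valued structure over a finite domain is a core: every unary operation in the
support of a fractional polymorphism is injective. -/
def FinIsCore {τ : Signature} {C : Type} [Fintype C] [DecidableEq C]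
    (Γ : VStruct τ C) : Prop :=
  ∀ w : ((Fin 1 → C) → C) → ℝ≥0, FinFracPol Γ w →
    ∀ f, w f ≠ 0 → Function.Injective f

/-! If a unary fractional polymorphism `ω` of `Γ` has a non-injective map `g` in its support, then
`Γ` retracts fractionally onto its substructure on the range of `g`. Indeed, the fractional
homomorphisms `Γ → Γ` form a compact set, because expected costs are lower semicontinuous in the
weights; among them choose `μ` of maximal mass on the maps into the range of `g`. If `μ` charged
another map, following just those other maps by an independent draw from `ω`, which selects `g` with
positive probability, would increase this mass. Hence `μ` lives on maps into the range of `g`, and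
induction on the size of the domain yields a core. -/

/-- The action of `ℝ≥0` on `EReal` by multiplication, with `0 • ⊤ = 0`. Nonnegative real scalars
distribute over all sums, even `⊤ + ⊥`, so that expectations with values in `EReal` are linear. -/
noncomputable local instance : Module ℝ≥0 EReal where
  smul r x := ((r : ℝ) : EReal) * x
  one_smul := one_mul
  mul_smul r s x := by
    change (((r * s : ℝ≥0) : ℝ) : EReal) * x = (r : ℝ) * ((s : ℝ) * x)
    rw [NNReal.coe_mul, EReal.coe_mul, mul_assoc]
  smul_zero r := mul_zero _
  smul_add r := EReal.left_distrib_of_nonneg_of_ne_top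
    (EReal.coe_nonneg.2 r.coe_nonneg) (EReal.coe_ne_top _)
  add_smul r s x := by
    change (((r + s : ℝ≥0) : ℝ) : EReal) * x = (r : ℝ) * x + (s : ℝ) * x
    rw [NNReal.coe_add, EReal.coe_add]
    exact EReal.right_distrib_of_nonneg (EReal.coe_nonneg.2 r.coe_nonneg)
      (EReal.coe_nonneg.2 s.coe_nonneg)
  zero_smul := zero_mul

theorem nnreal_smul_eq_coe_mul (r : ℝ≥0) (x : EReal) : r • x = ((r : ℝ) : EReal) * x := rfl

local instance : PosSMulMono ℝ≥0 EReal where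
  smul_le_smul_of_nonneg_left r _ _ _ h :=
    mul_le_mul_of_nonneg_left h (EReal.coe_nonneg.2 r.coe_nonneg)

theorem nnreal_smul_ereal_top {r : ℝ≥0} (hr : r ≠ 0) : r • (⊤ : EReal) = ⊤ :=
  EReal.coe_mul_top_of_pos (NNReal.coe_pos.2 (pos_iff_ne_zero.2 hr))

theorem nnreal_smul_ereal_ne_bot (r : ℝ≥0) {x : EReal} (hx : x ≠ ⊥) : r • x ≠ ⊥ := by
  induction x with
  | bot => exact absurd rfl hx
  | coe x => exact EReal.coe_ne_bot (r * x)
  | top =>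
    obtain rfl | hr := eq_or_ne r 0
    · simp
    · simp [nnreal_smul_ereal_top hr]

theorem lowerSemicontinuous_nnreal_smul {x : EReal} (hx : x ≠ ⊥) :
    LowerSemicontinuous fun r : ℝ≥0 => r • x := by
  induction x with
  | bot => exact absurd rfl hx
  | coe x =>
    have : Continuous fun r : ℝ≥0 => (r * x : ℝ) := by fun_prop
    exact (continuous_coe_real_ereal.comp this).lowerSemicontinuous
  | top =>
    intro r y hy
    obtain rfl | hr := eq_or_ne r 0
    · refine .of_forall fun s => hy.trans_le ?_
      simp only [zero_smul]
      exact mul_nonneg (EReal.coe_nonneg.2 s.coe_nonneg) le_top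
    · filter_upwards [isOpen_ne.mem_nhds hr] with s hs
      rwa [nnreal_smul_ereal_top hs, ← nnreal_smul_ereal_top hr]

theorem lowerSemicontinuous_ereal_sum {X ι : Type*} [TopologicalSpace X] (s : Finset ι)
    {f : ι → X → EReal} (hf : ∀ i, LowerSemicontinuous (f i)) (hbot : ∀ i x, f i x ≠ ⊥) :
    LowerSemicontinuous fun x => ∑ i ∈ s, f i x := by
  classical
  induction s using Finset.induction_on with
  | empty => simpa using lowerSemicontinuous_const
  | insert i s hi ih =>
    have hsum (x : X) : ∑ j ∈ s, f j x ≠ ⊥ :=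
      Finset.sum_induction _ (· ≠ ⊥) (fun _ _ ha hb => by simp [EReal.add_eq_bot_iff, ha, hb])
        EReal.zero_ne_bot fun j _ => hbot j x
    simp only [Finset.sum_insert hi]
    exact (hf i).add' ih fun x => EReal.continuousAt_add (.inr (hsum x)) (.inl (hbot i x))

section Expect

variable {ι κ M : Type*} [Fintype ι] [AddCommMonoid M] [Module ℝ≥0 M]

/-- The expectation of `v` under the weights `μ`. The values lie in `EReal` for the costs of a
valued structure and in `ℝ≥0` for the mass `μ` gives to a set, the expectation of its indicator. -/
def expect (μ : ι → ℝ≥0) (v : ι → M) : M :=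
  ∑ i, μ i • v i

/-- The law of the second stage of a two-stage random choice: first `i` with weights `μ`, then an
element of `κ` with weights `K i`. -/
def mixture (μ : ι → ℝ≥0) (K : ι → κ → ℝ≥0) : κ → ℝ≥0 :=
  ∑ i, μ i • K i

/-- The image of the weights `μ` under `φ`. -/
def pushforward [DecidableEq κ] (φ : ι → κ) (μ : ι → ℝ≥0) : κ → ℝ≥0 :=
  mixture μ fun i => Pi.single (φ i) 1

@[simp]
theorem expect_single [DecidableEq ι] (i : ι) (v : ι → M) :
    expect (Pi.single i 1) v = v i := by
  simp [expect, Pi.single_apply, ite_smul]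

theorem expect_mixture [Fintype κ] (μ : ι → ℝ≥0) (K : ι → κ → ℝ≥0) (v : κ → M) :
    expect (mixture μ K) v = expect μ fun i => expect (K i) v := by
  simp only [expect, mixture, Finset.sum_apply, Pi.smul_apply, Finset.sum_smul, Finset.smul_sum,
    smul_assoc]
  exact Finset.sum_comm

theorem expect_pushforward [Fintype κ] [DecidableEq κ] (φ : ι → κ) (μ : ι → ℝ≥0) (v : κ → M) :
    expect (pushforward φ μ) v = expect μ fun i => v (φ i) := by
  simp only [pushforward, expect_mixture, expect_single]

theorem expect_congr {μ : ι → ℝ≥0} {u v : ι → M} (h : ∀ i, μ i ≠ 0 → u i = v i) :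
    expect μ u = expect μ v := by
  refine Finset.sum_congr rfl fun i _ => ?_
  obtain hi | hi := eq_or_ne (μ i) 0
  · simp only [hi, zero_smul]
  · rw [h i hi]

theorem expect_mono [PartialOrder M] [IsOrderedAddMonoid M] [PosSMulMono ℝ≥0 M] (μ : ι → ℝ≥0)
    {u v : ι → M} (h : ∀ i, u i ≤ v i) : expect μ u ≤ expect μ v :=
  Finset.sum_le_sum fun i _ => smul_le_smul_of_nonneg_left (h i) zero_le

theorem expect_lt_expect {μ u v : ι → ℝ≥0} (h : ∀ i, u i ≤ v i) {i : ι} (hμ : μ i ≠ 0)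
    (hi : u i < v i) : expect μ u < expect μ v :=
  Finset.sum_lt_sum (fun j _ => mul_le_mul_right (h j) (μ j))
    ⟨i, Finset.mem_univ i, mul_lt_mul_of_pos_left hi (pos_iff_ne_zero.2 hμ)⟩

theorem expect_pos {μ u : ι → ℝ≥0} {i : ι} (hμ : μ i ≠ 0) (hu : u i ≠ 0) : 0 < expect μ u := by
  simpa [expect] using
    expect_lt_expect (u := 0) (fun _ => zero_le) hμ (pos_iff_ne_zero.2 hu)

theorem pushforward_apply_ne_zero [DecidableEq κ] (φ : ι → κ) {μ : ι → ℝ≥0} {i : ι}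
    (hi : μ i ≠ 0) : pushforward φ μ (φ i) ≠ 0 := by
  have := expect_pos (u := fun j => (Pi.single (φ j) 1 : κ → ℝ≥0) (φ i)) hi (by simp)
  simpa [pushforward, mixture, expect] using this.ne'

theorem lowerSemicontinuous_expect {v : ι → EReal} (hv : ∀ i, v i ≠ ⊥) :
    LowerSemicontinuous fun μ : ι → ℝ≥0 => expect μ v :=
  lowerSemicontinuous_ereal_sum _
    (fun i => (lowerSemicontinuous_nnreal_smul (hv i)).comp (continuous_apply i))
    fun i μ => nnreal_smul_ereal_ne_bot (μ i) (hv i)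

end Expect

section FinDist

variable {ι κ : Type} [Fintype ι] [Fintype κ]

theorem finDist_iff_expect_one {μ : ι → ℝ≥0} : FinDist μ ↔ expect μ (1 : ι → ℝ≥0) = 1 := by
  simp [FinDist, expect]

theorem finDist_single [DecidableEq ι] (i : ι) : FinDist (Pi.single i 1 : ι → ℝ≥0) := by
  simp [finDist_iff_expect_one]

theorem FinDist.mixture {μ : ι → ℝ≥0} {K : ι → κ → ℝ≥0} (hμ : FinDist μ)
    (hK : ∀ i, FinDist (K i)) : FinDist (mixture μ K) := by
  rw [finDist_iff_expect_one, expect_mixture] at *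
  exact (expect_congr fun i _ => finDist_iff_expect_one.1 (hK i)).trans hμ

theorem FinDist.pushforward [DecidableEq κ] (φ : ι → κ) {μ : ι → ℝ≥0} (hμ : FinDist μ) :
    FinDist (pushforward φ μ) :=
  hμ.mixture fun i => finDist_single (φ i)

theorem isCompact_setOf_finDist : IsCompact {μ : ι → ℝ≥0 | FinDist μ} := by
  simpa [stdSimplex, FinDist] using isCompact_stdSimplex ℝ≥0 ι

end FinDist

theorem card_range_lt_of_not_injective {C : Type*} [Fintype C] [DecidableEq C] {g : C → C}
    (hg : ¬ Function.Injective g) :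
    Fintype.card (Set.range g) < Fintype.card C := by
  obtain ⟨c, hc⟩ := not_forall.1 (mt Finite.injective_iff_surjective.2 hg)
  exact Fintype.card_subtype_lt hc

theorem QInf.toE_ne_bot (x : QInf) : x.toE ≠ ⊥ := by
  induction x using WithTop.recTopCoe with
  | top => exact top_ne_bot
  | coe q => exact EReal.coe_ne_bot q

/-- The valued structure on `D` induced from one on `C` along `i : D → C`. If `i` is the inclusion
of a subset, this is the substructure on that subset. -/
def VStruct.comap {τ : Signature} {C D : Type} (i : D → C) (Γ : VStruct τ C) : VStruct τ D :=
  fun s a => Γ s (i ∘ a)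

section FracHom

variable {τ : Signature} {B C D : Type} [Fintype B] [Fintype C] [Fintype D]
  [DecidableEq B] [DecidableEq D]
  {Θ : VStruct τ B} {Γ : VStruct τ C} {Δ : VStruct τ D}

theorem finFracHom_iff {ν : (B → C) → ℝ≥0} : FinFracHom Θ Γ ν ↔
    FinDist ν ∧ ∀ s a, expect ν (fun g => (Γ s (g ∘ a)).toE) ≤ (Θ s a).toE :=
  Iff.rfl

theorem FinFracHom.codRestrict [Nonempty D] {ν : (B → C) → ℝ≥0} (hν : FinFracHom Θ Γ ν)
    {i : D → C} (hi : ∀ h, ν h ≠ 0 → Set.range h ⊆ Set.range i) :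
    FinFracHom Θ (Γ.comap i) (pushforward (Function.invFun i ∘ ·) ν) := by
  refine finFracHom_iff.2 ⟨hν.1.pushforward _, fun s a => ?_⟩
  rw [expect_pushforward]
  refine (expect_congr fun h hh => ?_).trans_le (hν.2 s a)
  have hlift : i ∘ Function.invFun i ∘ h = h :=
    funext fun b => Function.invFun_eq (hi h hh ⟨b, rfl⟩)
  simp only [VStruct.comap, ← Function.comp_assoc] at hlift ⊢
  rw [hlift]

variable (Θ Γ) in
theorem isCompact_setOf_finFracHom : IsCompact {ν | FinFracHom Θ Γ ν} := by
  simp only [finFracHom_iff, Set.ofPred_and, Set.ofPred_forall]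
  exact isCompact_setOf_finDist.inter_right <| isClosed_iInter fun s => isClosed_iInter fun a =>
    (lowerSemicontinuous_expect fun _ => QInf.toE_ne_bot _).isClosed_preimage _

variable [DecidableEq C]

theorem finFracHom_comap (i : D → C) (Γ : VStruct τ C) :
    FinFracHom (Γ.comap i) Γ (Pi.single i 1) :=
  finFracHom_iff.2 ⟨finDist_single i, fun _ _ => (expect_single i _).le⟩

theorem finFracHom_id (Γ : VStruct τ C) : FinFracHom Γ Γ (Pi.single id 1) :=
  finFracHom_comap id Γ

theorem FinFracHom.comp {ν : (B → C) → ℝ≥0} {K : (B → C) → (C → D) → ℝ≥0}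
    (hν : FinFracHom Θ Γ ν) (hK : ∀ g, FinFracHom Γ Δ (K g)) :
    FinFracHom Θ Δ (mixture ν fun g => pushforward (· ∘ g) (K g)) := by
  refine finFracHom_iff.2 ⟨hν.1.mixture fun g => (hK g).1.pushforward _, fun s a => ?_⟩
  simp only [expect_mixture, expect_pushforward]
  exact (expect_mono ν fun g => (hK g).2 s (g ∘ a)).trans (hν.2 s a)

theorem FinFracHom.exists_support_subset {ν : (B → C) → ℝ≥0} {ω : (C → C) → ℝ≥0}
    (hν : FinFracHom Θ Γ ν) (hω : FinFracHom Γ Γ ω) {g : C → C} (hg : ω g ≠ 0)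
    {A : Set (B → C)} (hA : ∀ h, g ∘ h ∈ A) :
    ∃ μ, FinFracHom Θ Γ μ ∧ ∀ h, μ h ≠ 0 → h ∈ A := by
  classical
  let hit : (B → C) → ℝ≥0 := A.indicator 1
  have mass_continuous : Continuous fun μ : (B → C) → ℝ≥0 => expect μ hit := by
    unfold expect
    fun_prop
  obtain ⟨μ, hμ, hmax⟩ := (isCompact_setOf_finFracHom Θ Γ).exists_isMaxOn ⟨ν, hν⟩
    mass_continuous.continuousOn
  refine ⟨μ, hμ, fun h₀ hμh₀ => by_contra fun hh₀ => ?_⟩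
  -- Follow `h` by a random map drawn from `ω` only if `h ∉ A`: no mass leaves `A`, and `g` brings
  -- some of the mass at `h₀` into `A`.
  let K (h : B → C) : (C → C) → ℝ≥0 := if h ∈ A then Pi.single id 1 else ω
  have hK (h) : FinFracHom Γ Γ (K h) := by
    by_cases hh : h ∈ A
    · simpa only [K, if_pos hh] using finFracHom_id Γ
    · simpa only [K, if_neg hh] using hω
  have mass_comp : expect (mixture μ fun h => pushforward (· ∘ h) (K h)) hit =
      expect μ fun h => expect (K h) fun k => hit (k ∘ h) := by
    simp only [expect_mixture, expect_pushforward]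
  have hit_le (h) : hit h ≤ expect (K h) fun k => hit (k ∘ h) := by
    by_cases hh : h ∈ A <;> simp [K, hit, hh]
  have hit_lt : hit h₀ < expect (K h₀) fun k => hit (k ∘ h₀) := by
    rw [show hit h₀ = 0 from Set.indicator_of_notMem hh₀ 1]
    exact expect_pos (i := g) (by simpa only [K, if_neg hh₀] using hg) (by simp [hit, hA h₀])
  exact (hmax (hμ.comp hK)).not_gt (mass_comp ▸ expect_lt_expect hit_le hμh₀ hit_lt)

theorem FinFracHom.exists_comap_range {ω : (C → C) → ℝ≥0} (hω : FinFracHom Γ Γ ω)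
    [Nonempty C] {g : C → C} (hg : ω g ≠ 0) :
    ∃ ν, FinFracHom Γ (Γ.comap ((↑) : Set.range g → C)) ν := by
  obtain ⟨μ, hμ, hrange⟩ := hω.exists_support_subset hω hg
    (A := {h | Set.range h ⊆ Set.range g}) fun h => Set.range_comp_subset_range h g
  exact ⟨_, hμ.codRestrict fun h hh => (hrange h hh).trans_eq Subtype.range_coe.symm⟩

theorem FinFracPol.finFracHom {w : ((Fin 1 → C) → C) → ℝ≥0} (hw : FinFracPol Γ w) :
    FinFracHom Γ Γ (pushforward (fun f c => f fun _ => c) w) := by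
  refine finFracHom_iff.2 ⟨hw.1.pushforward _, fun s a => ?_⟩
  rw [expect_pushforward]
  simpa [expect, nnreal_smul_eq_coe_mul, Function.comp_def] using hw.2 s fun _ => a

theorem finIsCore_of_forall_injective
    (h : ∀ ω, FinFracHom Γ Γ ω → ∀ g, ω g ≠ 0 → Function.Injective g) : FinIsCore Γ := by
  intro w hw f hf
  have hinj : Function.Injective fun c => f fun _ => c :=
    h _ hw.finFracHom _ (pushforward_apply_ne_zero _ hf)
  have hf_eq : f = (fun c => f fun _ => c) ∘ Equiv.funUnique (Fin 1) C := by
    ext x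
    exact congrArg f (funext fun j => congrArg x (Subsingleton.elim j 0))
  rw [hf_eq]
  exact hinj.comp (Equiv.injective _)

theorem exists_finFracHom_comap_card_range_lt (hΓ : ¬ FinIsCore Γ) : ∃ g : C → C,
    Fintype.card (Set.range g) < Fintype.card C ∧
      ∃ ν, FinFracHom Γ (Γ.comap ((↑) : Set.range g → C)) ν := by
  obtain ⟨ω, hω, g, hg, hinj⟩ : ∃ ω, FinFracHom Γ Γ ω ∧ ∃ g, ω g ≠ 0 ∧ ¬ Function.Injective g := by
    by_contra! h
    exact hΓ (finIsCore_of_forall_injective h)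
  obtain ⟨c, -⟩ := not_forall.1 hinj
  have : Nonempty C := ⟨c⟩
  exact ⟨g, card_range_lt_of_not_injective hinj, hω.exists_comap_range hg⟩

end FracHom

/-- every valued structure `Γ` with a finite domain is fractionally
homomorphically equivalent to a core valued structure `Δ` with a finite domain (and the
same signature). -/
theorem exists_core_equiv {τ : Signature} {C : Type} [Fintype C] [DecidableEq C]
    (Γ : VStruct τ C) :
    ∃ (D : Type) (iD : Fintype D) (dD : DecidableEq D) (Δ : VStruct τ D),
      (@FinIsCore τ D iD dD Δ) ∧
      (∃ ν : (C → D) → ℝ≥0, @FinFracHom τ C D ‹Fintype C› ‹DecidableEq C› iD Γ Δ ν) ∧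
      (∃ ν : (D → C) → ℝ≥0, @FinFracHom τ D C iD dD ‹Fintype C› Δ Γ ν) := by
  induction hn : Fintype.card C using Nat.strong_induction_on generalizing C with
  | _ n ih =>
    by_cases hΓ : FinIsCore Γ
    · exact ⟨C, _, _, Γ, hΓ, ⟨_, finFracHom_id Γ⟩, ⟨_, finFracHom_id Γ⟩⟩
    · obtain ⟨g, hcard, _, hretract⟩ := exists_finFracHom_comap_card_range_lt hΓ
      obtain ⟨D, _, _, Δ, hΔ, ⟨_, hto⟩, ⟨_, hfrom⟩⟩ := ih _ (hn ▸ hcard) (Γ.comap (↑)) rfl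
      exact ⟨D, _, _, Δ, hΔ, ⟨_, hretract.comp fun _ => hto⟩,
        ⟨_, hfrom.comp fun _ => finFracHom_comap _ Γ⟩⟩
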